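/- Let T > 0. Let (u, B, P) and (u⁰, B⁰, P⁰) with u, B, u⁰, B⁰ : ℝ × ℝ³ → ℝ³ and P, P⁰ : ℝ × ℝ³ → ℝ be smooth (jointly in (t,x)) and horizontally periodic in x for each t, both satisfying the ideal incompressible MHD system at every (t,x) ∈ [0,T] × ℝ³: ∂ₜu + (curl u) × u + B × (curl B) + ∇P = 0, div u = 0, ∂ₜB = curl(u × B), div B = 0 (and likewise for (u⁰, B⁰, P⁰)). Assume that for every t ∈ [0,T], u₃(t,·) = 0 and u⁰₃(t,·) = 0 at every point of ∂Ω, and B₁(t,·) = B₂(t,·) = 0 and B⁰₁(t,·) = B⁰₂(t,·) = 0 at every point of ∂Ω. If u(0,x) = u⁰(0,x) and B(0,x) = B⁰(0,x) for every x with 0 ≤ x₃ ≤ 1, then u(t,x) = u⁰(t,x) and B(t,x) = B⁰(t,x) for every t ∈ [0,T] and every x with 0 ≤ x₃ ≤ 1. -/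

import Mathlib

noncomputable section

open MeasureTheory

/-- Points/vectors in ℝ³, indexed by `Fin 3` (so index `0,1,2` stand for coordinates `1,2,3`). -/
abbrev V3 : Type := Fin 3 → ℝ

/-- Partial derivative in the `i`-th coordinate direction. -/
def pd (i : Fin 3) (f : V3 → ℝ) (x : V3) : ℝ := fderiv ℝ f x (Pi.single i 1)

/-- Divergence of a vector field. -/
def vdiv (u : V3 → V3) (x : V3) : ℝ :=
  pd 0 (fun y => u y 0) x + pd 1 (fun y => u y 1) x + pd 2 (fun y => u y 2) x

/-- Curl of a vector field. -/
def vcurl (u : V3 → V3) (x : V3) : V3 :=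
  ![pd 1 (fun y => u y 2) x - pd 2 (fun y => u y 1) x,
    pd 2 (fun y => u y 0) x - pd 0 (fun y => u y 2) x,
    pd 0 (fun y => u y 1) x - pd 1 (fun y => u y 0) x]

/-- Laplacian of a scalar function. -/
def lap (f : V3 → ℝ) (x : V3) : ℝ :=
  pd 0 (pd 0 f) x + pd 1 (pd 1 f) x + pd 2 (pd 2 f) x

/-- Componentwise Laplacian of a vector field. -/
def vlap (u : V3 → V3) (x : V3) : V3 := fun i => lap (fun y => u y i) x

/-- Advective derivative `(u·∇)V`. -/
def adv (u V : V3 → V3) (x : V3) : V3 := fun i =>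
  u x 0 * pd 0 (fun y => V y i) x + u x 1 * pd 1 (fun y => V y i) x +
    u x 2 * pd 2 (fun y => V y i) x

/-- Cross product in ℝ³. -/
def cross (a b : V3) : V3 :=
  ![a 1 * b 2 - a 2 * b 1, a 2 * b 0 - a 0 * b 2, a 0 * b 1 - a 1 * b 0]

/-- Dot product in ℝ³. -/
def dot (a b : V3) : ℝ := a 0 * b 0 + a 1 * b 1 + a 2 * b 2

/-- Gradient of a scalar function. -/
def grad (f : V3 → ℝ) (x : V3) : V3 := fun i => pd i f x

/-- The boundary `∂Ω = {x : x₃ = 0 or x₃ = 1}`. -/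
def onBdry (x : V3) : Prop := x 2 = 0 ∨ x 2 = 1

/-- Horizontal periodicity (period 1 in x₁ and x₂) of a scalar function. -/
def hperS (f : V3 → ℝ) : Prop :=
  (∀ x, f (x + Pi.single 0 1) = f x) ∧ (∀ x, f (x + Pi.single 1 1) = f x)

/-- Horizontal periodicity (period 1 in x₁ and x₂) of a vector field. -/
def hperV (u : V3 → V3) : Prop :=
  (∀ x, u (x + Pi.single 0 1) = u x) ∧ (∀ x, u (x + Pi.single 1 1) = u x)

/-- The unit cube `Q = [0,1]³`. -/
def Q3 : Set V3 := Set.Icc 0 1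

/-! Put `v = u - u⁰`, `b = B - B⁰`, `q = P - P⁰`. Testing the difference of the momentum equations
with `v` and that of the induction equations with `b`, the two terms coupling `v × B` and `curl b`
combine to `div ((v × B) × b)`, so that `∂ₜ (|v|² + |b|²) / 2` is the divergence of a flux plus a
source that is quadratic in `(v, b)` with first derivatives of `u⁰`, `B⁰` as its coefficients. In
particular, no derivative of `v` or `b` has to be controlled. On `∂Ω` the normal component of the
flux vanishes: `v₃ = u⁰₃ = 0` removes all terms but the last, and `(v × B) × b` has no normal
component because `b` is normal. Integrating over one period cell, Grönwall's inequality gives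
`v = b = 0`. -/

section IntegralEstimates

theorem integral_divergence_eq_zero_of_faces {n : ℕ} {E : Type*} [NormedAddCommGroup E]
    [NormedSpace ℝ E] {F : (Fin (n + 1) → ℝ) → Fin (n + 1) → E} (hF : ContDiff ℝ 1 F)
    {a b : Fin (n + 1) → ℝ} (hab : a ≤ b)
    (hfaces : ∀ i y, F (Fin.insertNth i (b i) y) i = F (Fin.insertNth i (a i) y) i) :
    ∫ x in Set.Icc a b, ∑ i, fderiv ℝ F x (Pi.single i 1) i = 0 := by
  have hF' : Continuous (fderiv ℝ F) := hF.continuous_fderiv one_ne_zero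
  rw [integral_divergence_of_hasFDerivAt_off_countable a b hab F (fderiv ℝ F) ∅
    Set.countable_empty hF.continuous.continuousOn
    (fun x _ => (hF.differentiable one_ne_zero x).hasFDerivAt)
    (Continuous.integrableOn_Icc <| continuous_finsetSum _ fun i _ =>
      (continuous_apply i).comp (hF'.clm_apply continuous_const))]
  simp only [hfaces, sub_self, Finset.sum_const_zero]

theorem eqOn_zero_of_setIntegral_eq_zero {X : Type*} [TopologicalSpace X] [T2Space X]
    [MeasurableSpace X] [OpensMeasurableSpace X] {μ : Measure X} [IsFiniteMeasureOnCompacts μ]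
    [μ.IsOpenPosMeasure] {K : Set X} (hK : IsCompact K) (hKint : K ⊆ closure (interior K))
    {f : X → ℝ} (hf : ContinuousOn f K) (hf0 : ∀ x ∈ K, 0 ≤ f x)
    (hint : ∫ x in K, f x ∂μ = 0) : Set.EqOn f 0 K := by
  have hae : f =ᵐ[μ.restrict K] 0 :=
    (setIntegral_eq_zero_iff_of_nonneg_ae
      ((ae_restrict_iff' hK.measurableSet).2 (.of_forall hf0)) (hf.integrableOn_compact hK)).1 hint
  exact Measure.eqOn_of_ae_eq hae hf continuousOn_const hKint

variable {E : Type*} [NormedAddCommGroup E] [NormedSpace ℝ E]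

theorem continuous_deriv_of_contDiff {F : Type*} [NormedAddCommGroup F] [NormedSpace ℝ F]
    {g : ℝ → E → F} (hg : ContDiff ℝ 1 (Function.uncurry g)) :
    Continuous fun p : ℝ × E => deriv (fun s => g s p.2) p.1 := by
  have hg' : ContDiff ℝ 1 fun q : (ℝ × E) × ℝ => g q.2 q.1.2 :=
    hg.comp (f := fun q : (ℝ × E) × ℝ => (q.2, q.1.2)) (by fun_prop)
  have h : ContDiff ℝ 0 fun p : ℝ × E => fderiv ℝ (fun s => g s p.2) p.1 :=
    ContDiff.fderiv (f := fun (p : ℝ × E) s => g s p.2) hg' contDiff_fst (by simp)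
  exact h.continuous.clm_apply continuous_const

theorem exists_norm_fderiv_le_of_isCompact {F : Type*} [NormedAddCommGroup F] [NormedSpace ℝ F]
    {g : ℝ → E → F} (hg : ContDiff ℝ 1 (Function.uncurry g)) {I : Set ℝ} (hI : IsCompact I)
    {K : Set E} (hK : IsCompact K) : ∃ M, ∀ t ∈ I, ∀ x ∈ K, ‖fderiv ℝ (g t) x‖ ≤ M := by
  have hg' : ContDiff ℝ 1 fun q : (ℝ × E) × E => g q.1.1 q.2 :=
    hg.comp (f := fun q : (ℝ × E) × E => (q.1.1, q.2)) (by fun_prop)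
  have h : ContDiff ℝ 0 fun p : ℝ × E => fderiv ℝ (g p.1) p.2 :=
    ContDiff.fderiv (f := fun p : ℝ × E => g p.1) hg' contDiff_snd (by simp)
  obtain ⟨M, hM⟩ := (hI.prod hK).exists_bound_of_continuousOn h.continuous.continuousOn
  exact ⟨M, fun t ht x hx => hM (t, x) ⟨ht, hx⟩⟩

variable [MeasurableSpace E] [BorelSpace E] {μ : Measure E} [IsFiniteMeasureOnCompacts μ]
  {K : Set E}

theorem hasDerivAt_setIntegral_of_contDiff {F : Type*} [NormedAddCommGroup F] [NormedSpace ℝ F]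
    (hK : IsCompact K) {g : ℝ → E → F} (hg : ContDiff ℝ 1 (Function.uncurry g)) (t : ℝ) :
    HasDerivAt (fun s => ∫ x in K, g s x ∂μ) (∫ x in K, deriv (fun s => g s x) t ∂μ) t := by
  have hg' := continuous_deriv_of_contDiff hg
  have hslice (s : ℝ) : Continuous (g s) := hg.continuous.comp (Continuous.prodMk_right s)
  have hg't : Continuous fun x => deriv (fun s => g s x) t :=
    hg'.comp (Continuous.prodMk_right t)
  obtain ⟨C, hC⟩ := ((isCompact_closedBall t 1).prod hK).exists_bound_of_continuousOn
    hg'.continuousOn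
  refine (hasDerivAt_integral_of_dominated_loc_of_deriv_le
    (F' := fun s x => deriv (fun r => g r x) s) (bound := fun _ => C)
    (Metric.closedBall_mem_nhds t one_pos) ?_ ?_ ?_ ?_ ?_ ?_).2
  · exact .of_forall fun s =>
      (hslice s).continuousOn.aestronglyMeasurable_of_isCompact hK hK.measurableSet
  · exact (hslice t).continuousOn.integrableOn_compact hK
  · exact hg't.continuousOn.aestronglyMeasurable_of_isCompact hK hK.measurableSet
  · exact (ae_restrict_iff' hK.measurableSet).2 (.of_forall fun x hx s hs => hC (s, x) ⟨hs, hx⟩)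
  · exact continuousOn_const.integrableOn_compact hK
  · refine .of_forall fun x s _ => DifferentiableAt.hasDerivAt ?_
    have hx : ContDiff ℝ 1 fun r => g r x := hg.comp (contDiff_prodMk_left x)
    exact hx.differentiable one_ne_zero s

/- Grönwall's inequality applied to `t ↦ ∫ x in K, g t x`. -/
theorem eqOn_zero_of_abs_setIntegral_deriv_le [μ.IsOpenPosMeasure] (hK : IsCompact K)
    (hKint : K ⊆ closure (interior K)) {g : ℝ → E → ℝ}
    (hg : ContDiff ℝ 1 (Function.uncurry g)) (hg0 : ∀ t, ∀ x ∈ K, 0 ≤ g t x) {a b C : ℝ}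
    (hga : Set.EqOn (g a) 0 K)
    (hderiv : ∀ t ∈ Set.Icc a b,
      |∫ x in K, deriv (fun s => g s x) t ∂μ| ≤ C * ∫ x in K, g t x ∂μ) :
    ∀ t ∈ Set.Icc a b, Set.EqOn (g t) 0 K := by
  have hE (t : ℝ) := hasDerivAt_setIntegral_of_contDiff (μ := μ) hK hg t
  have hEa : ∫ x in K, g a x ∂μ = 0 := by
    simpa using setIntegral_congr_fun (μ := μ) hK.measurableSet hga
  have hE0 := eq_zero_of_abs_deriv_le_mul_abs_self_of_eq_zero_right
    (fun t _ => (hE t).continuousAt.continuousWithinAt) (fun t _ => (hE t).hasDerivWithinAt) hEa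
    (fun t ht => (hderiv t (Set.Ico_subset_Icc_self ht)).trans_eq <| by
      rw [Real.norm_of_nonneg (setIntegral_nonneg hK.measurableSet (hg0 t))])
  intro t ht
  have hgt : Continuous (g t) := hg.continuous.comp (Continuous.prodMk_right t)
  exact eqOn_zero_of_setIntegral_eq_zero hK hKint hgt.continuousOn (hg0 t) (hE0 t ht)

end IntegralEstimates

section DotCross

theorem dot_eq_dotProduct (v w : V3) : dot v w = v ⬝ᵥ w :=
  (Fin.sum_univ_three fun i => v i * w i).symm

theorem dot_self_nonneg (v : V3) : 0 ≤ dot v v := by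
  simpa only [dot_eq_dotProduct, star_trivial] using dotProduct_self_star_nonneg v

theorem dot_self_eq_zero {v : V3} : dot v v = 0 ↔ v = 0 := by
  rw [dot_eq_dotProduct, dotProduct_self_eq_zero]

theorem norm_sq_le_dot_self (v : V3) : ‖v‖ ^ 2 ≤ dot v v := by
  have hcoord (i : Fin 3) : v i ^ 2 ≤ dot v v := by
    rw [dot_eq_dotProduct, sq]
    exact Finset.single_le_sum (f := fun j => v j * v j) (fun j _ => mul_self_nonneg (v j))
      (Finset.mem_univ i)
  rw [← Real.le_sqrt (norm_nonneg v) (dot_self_nonneg v),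
    pi_norm_le_iff_of_nonneg (Real.sqrt_nonneg _)]
  exact fun i => Real.abs_le_sqrt (hcoord i)

theorem abs_dot_le (v w : V3) : |dot v w| ≤ 3 * (‖v‖ * ‖w‖) := by
  have h (i : Fin 3) : |v i * w i| ≤ ‖v‖ * ‖w‖ := by
    rw [abs_mul]
    exact mul_le_mul (norm_le_pi_norm v i) (norm_le_pi_norm w i) (abs_nonneg _) (norm_nonneg _)
  calc |dot v w| ≤ |v 0 * w 0| + |v 1 * w 1| + |v 2 * w 2| := abs_add_three _ _ _
    _ ≤ 3 * (‖v‖ * ‖w‖) := by linarith [h 0, h 1, h 2]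

variable {E : Type*} [NormedAddCommGroup E] [NormedSpace ℝ E] {a b : E → V3}

@[fun_prop]
theorem contDiff_dot {n : WithTop ℕ∞} (ha : ContDiff ℝ n a) (hb : ContDiff ℝ n b) :
    ContDiff ℝ n fun y => dot (a y) (b y) := by
  unfold dot; fun_prop

@[fun_prop]
theorem contDiff_cross {n : WithTop ℕ∞} (ha : ContDiff ℝ n a) (hb : ContDiff ℝ n b) :
    ContDiff ℝ n fun y => cross (a y) (b y) := by
  refine contDiff_pi.2 fun i => ?_
  fin_cases i <;> simp only [cross, Fin.zero_eta, Fin.mk_one, Fin.reduceFinMk, Matrix.cons_val] <;>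
    fun_prop

@[fun_prop]
theorem differentiableAt_dot {x : E} (ha : DifferentiableAt ℝ a x) (hb : DifferentiableAt ℝ b x) :
    DifferentiableAt ℝ (fun y => dot (a y) (b y)) x := by
  unfold dot; fun_prop

@[fun_prop]
theorem differentiableAt_cross {x : E} (ha : DifferentiableAt ℝ a x)
    (hb : DifferentiableAt ℝ b x) : DifferentiableAt ℝ (fun y => cross (a y) (b y)) x := by
  refine differentiableAt_pi.2 fun i => ?_
  fin_cases i <;> simp only [cross, Fin.zero_eta, Fin.mk_one, Fin.reduceFinMk, Matrix.cons_val] <;>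
    fun_prop

theorem hasDerivAt_dot {a b : ℝ → V3} {a' b' : V3} {t : ℝ} (ha : HasDerivAt a a' t)
    (hb : HasDerivAt b b' t) :
    HasDerivAt (fun s => dot (a s) (b s)) (dot a' (b t) + dot (a t) b') t := by
  have h (i : Fin 3) := (hasDerivAt_pi.1 ha i).fun_mul (hasDerivAt_pi.1 hb i)
  refine (((h 0).fun_add (h 1)).fun_add (h 2)).congr_deriv ?_
  simp only [dot]
  ring

end DotCross

section VectorCalculus

variable {a b c : V3 → V3} {f g : V3 → ℝ} {x : V3} {i : Fin 3}

theorem pd_add (hf : DifferentiableAt ℝ f x) (hg : DifferentiableAt ℝ g x) :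
    pd i (fun y => f y + g y) x = pd i f x + pd i g x := by
  simp [pd, fderiv_fun_add hf hg]

theorem pd_sub (hf : DifferentiableAt ℝ f x) (hg : DifferentiableAt ℝ g x) :
    pd i (fun y => f y - g y) x = pd i f x - pd i g x := by
  simp [pd, fderiv_fun_sub hf hg]

theorem pd_mul (hf : DifferentiableAt ℝ f x) (hg : DifferentiableAt ℝ g x) :
    pd i (fun y => f y * g y) x = f x * pd i g x + pd i f x * g x := by
  simp [pd, fderiv_fun_mul hf hg, mul_comm]

theorem pd_apply (ha : DifferentiableAt ℝ a x) (j : Fin 3) :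
    pd i (fun y => a y j) x = fderiv ℝ a x (Pi.single i 1) j := by
  rw [pd, fderiv_apply ha]; rfl

theorem adv_eq_fderiv (ha : DifferentiableAt ℝ a x) : adv c a x = fderiv ℝ a x (c x) := by
  ext j
  have hc : c x = ∑ i, c x i • (Pi.single i 1 : V3) := by
    simp [← Pi.single_smul', Finset.univ_sum_single]
  rw [hc, map_sum]
  simp [adv, pd_apply ha, Fin.sum_univ_three]

theorem vdiv_eq_sum_fderiv (ha : DifferentiableAt ℝ a x) :
    vdiv a x = ∑ i, fderiv ℝ a x (Pi.single i 1) i := by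
  simp only [vdiv, pd_apply ha, Fin.sum_univ_three]

theorem vdiv_add (ha : DifferentiableAt ℝ a x) (hb : DifferentiableAt ℝ b x) :
    vdiv (fun y => a y + b y) x = vdiv a x + vdiv b x := by
  simp (disch := fun_prop) only [vdiv, Pi.add_apply, pd_add]
  ring

theorem vdiv_sub (ha : DifferentiableAt ℝ a x) (hb : DifferentiableAt ℝ b x) :
    vdiv (fun y => a y - b y) x = vdiv a x - vdiv b x := by
  simp (disch := fun_prop) only [vdiv, Pi.sub_apply, pd_sub]
  ring

theorem vdiv_smul (hf : DifferentiableAt ℝ f x) (ha : DifferentiableAt ℝ a x) :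
    vdiv (fun y => f y • a y) x = f x * vdiv a x + dot (a x) (grad f x) := by
  simp (disch := fun_prop) only [vdiv, Pi.smul_apply, smul_eq_mul, pd_mul, dot, grad]
  ring

theorem vdiv_cross (ha : DifferentiableAt ℝ a x) (hb : DifferentiableAt ℝ b x) :
    vdiv (fun y => cross (a y) (b y)) x = dot (b x) (vcurl a x) - dot (a x) (vcurl b x) := by
  simp (disch := fun_prop) only [vdiv, vcurl, dot, cross, Matrix.cons_val, pd_sub, pd_mul]
  ring

theorem vcurl_add (ha : DifferentiableAt ℝ a x) (hb : DifferentiableAt ℝ b x) :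
    vcurl (fun y => a y + b y) x = vcurl a x + vcurl b x := by
  ext i
  fin_cases i <;> simp (disch := fun_prop) [vcurl, pd_add] <;> ring

theorem vcurl_sub (ha : DifferentiableAt ℝ a x) (hb : DifferentiableAt ℝ b x) :
    vcurl (fun y => a y - b y) x = vcurl a x - vcurl b x := by
  ext i
  fin_cases i <;> simp (disch := fun_prop) [vcurl, pd_sub] <;> ring

theorem vcurl_cross (ha : DifferentiableAt ℝ a x) (hb : DifferentiableAt ℝ b x) :
    vcurl (fun y => cross (a y) (b y)) x
      = vdiv b x • a x - vdiv a x • b x + adv b a x - adv a b x := by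
  ext i
  fin_cases i <;>
    simp (disch := fun_prop) [vcurl, vdiv, adv, cross, pd_sub, pd_mul] <;> ring

theorem dot_grad_dot (ha : DifferentiableAt ℝ a x) (hb : DifferentiableAt ℝ b x) :
    dot (c x) (grad (fun y => dot (a y) (b y)) x)
      = dot (adv c a x) (b x) + dot (a x) (adv c b x) := by
  simp (disch := fun_prop) only [dot, grad, adv, pd_add, pd_mul]
  ring

/- The Lamb form `(curl a) × b = (b·∇)a - (∇a)ᵀ b`, tested against `c`. -/
theorem dot_cross_vcurl (a b c : V3 → V3) (x : V3) :
    dot (c x) (cross (vcurl a x) (b x)) = dot (c x) (adv b a x) - dot (b x) (adv c a x) := by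
  simp only [dot, cross, vcurl, adv, Matrix.cons_val]
  ring

theorem abs_dot_adv_le {M : ℝ} (ha : DifferentiableAt ℝ a x) (hM : ‖fderiv ℝ a x‖ ≤ M) :
    |dot (b x) (adv c a x)| ≤ 3 / 2 * M * (dot (b x) (b x) + dot (c x) (c x)) := by
  have hM0 : 0 ≤ M := (norm_nonneg _).trans hM
  rw [adv_eq_fderiv ha]
  calc |dot (b x) (fderiv ℝ a x (c x))| ≤ 3 * (‖b x‖ * ‖fderiv ℝ a x (c x)‖) := abs_dot_le _ _
    _ ≤ 3 * (‖b x‖ * (M * ‖c x‖)) := by gcongr; exact ContinuousLinearMap.le_of_opNorm_le _ hM _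
    _ = 3 / 2 * M * (2 * ‖b x‖ * ‖c x‖) := by ring
    _ ≤ 3 / 2 * M * (‖b x‖ ^ 2 + ‖c x‖ ^ 2) := by gcongr; exact two_mul_le_add_sq _ _
    _ ≤ 3 / 2 * M * (dot (b x) (b x) + dot (c x) (c x)) := by
      gcongr <;> exact norm_sq_le_dot_self _

end VectorCalculus

section RelativeEnergy

/-- The energy density `(|v|² + |b|²) / 2` of a velocity `v` and a magnetic field `b`; it is applied
to the difference of two solutions. -/
def energyDensity (v b : V3) : ℝ := (dot v v + dot b b) / 2

/-- The right-hand side `-((curl u) × u + B × (curl B) + ∇P)` of the momentum equation. -/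
def mhdAcceleration (u B : V3 → V3) (P : V3 → ℝ) (x : V3) : V3 :=
  -(cross (vcurl u x) (u x) + cross (B x) (vcurl B x) + grad P x)

/-- The flux of the relative energy: `w` is the velocity of the reference solution, `B` the magnetic
field of the other one, and `v`, `b`, `q` are the differences of the velocities, magnetic fields and
pressures. -/
def relativeEnergyFlux (w B v b : V3 → V3) (q : V3 → ℝ) (x : V3) : V3 :=
  dot (v x) (w x) • v x - energyDensity (v x) (b x) • w x - q x • v x
    + cross (cross (v x) (B x)) (b x)

/-- The part of the production of relative energy that is not a divergence: `w`, `H` are the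
velocity and magnetic field of the reference solution, and `v`, `b` the differences. -/
def relativeEnergySource (w H v b : V3 → V3) (x : V3) : ℝ :=
  dot (b x) (adv b w x) - dot (v x) (adv v w x)
    + (dot (v x) (adv b H x) - dot (b x) (adv v H x))

theorem energyDensity_nonneg (v b : V3) : 0 ≤ energyDensity v b :=
  div_nonneg (add_nonneg (dot_self_nonneg v) (dot_self_nonneg b)) zero_le_two

theorem energyDensity_eq_zero {v b : V3} : energyDensity v b = 0 ↔ v = 0 ∧ b = 0 := by
  rw [energyDensity, div_eq_zero_iff, or_iff_left two_ne_zero,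
    add_eq_zero_iff_of_nonneg (dot_self_nonneg v) (dot_self_nonneg b), dot_self_eq_zero,
    dot_self_eq_zero]

@[fun_prop]
theorem contDiff_energyDensity {E : Type*} [NormedAddCommGroup E] [NormedSpace ℝ E]
    {n : WithTop ℕ∞} {v b : E → V3} (hv : ContDiff ℝ n v) (hb : ContDiff ℝ n b) :
    ContDiff ℝ n fun y => energyDensity (v y) (b y) := by
  unfold energyDensity; fun_prop

@[fun_prop]
theorem differentiableAt_energyDensity {E : Type*} [NormedAddCommGroup E] [NormedSpace ℝ E]
    {v b : E → V3} {x : E} (hv : DifferentiableAt ℝ v x) (hb : DifferentiableAt ℝ b x) :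
    DifferentiableAt ℝ (fun y => energyDensity (v y) (b y)) x := by
  unfold energyDensity; fun_prop

theorem hasDerivAt_energyDensity {v b : ℝ → V3} {v' b' : V3} {t : ℝ} (hv : HasDerivAt v v' t)
    (hb : HasDerivAt b b' t) :
    HasDerivAt (fun s => energyDensity (v s) (b s)) (dot (v t) v' + dot (b t) b') t := by
  refine (((hasDerivAt_dot hv hv).fun_add (hasDerivAt_dot hb hb)).div_const 2).congr_deriv ?_
  simp only [dot]
  ring

variable {w B H v b : V3 → V3} {q : V3 → ℝ} {x : V3}

theorem dot_grad_energyDensity (hv : DifferentiableAt ℝ v x) (hb : DifferentiableAt ℝ b x) :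
    dot (w x) (grad (fun y => energyDensity (v y) (b y)) x)
      = dot (v x) (adv w v x) + dot (b x) (adv w b x) := by
  have hE (i : Fin 3) : grad (fun y => energyDensity (v y) (b y)) x i
      = (grad (fun y => dot (v y) (v y)) x i + grad (fun y => dot (b y) (b y)) x i) / 2 := by
    simp (disch := fun_prop) only [grad, energyDensity, div_eq_mul_inv, pd_add, pd_mul]
    simp [pd]
  have hvv := dot_grad_dot (c := w) hv hv
  have hbb := dot_grad_dot (c := w) hb hb
  simp only [dot, hE] at hvv hbb ⊢
  linear_combination (hvv + hbb) / 2

theorem vdiv_relativeEnergyFlux (hw : DifferentiableAt ℝ w x) (hB : DifferentiableAt ℝ B x)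
    (hv : DifferentiableAt ℝ v x) (hb : DifferentiableAt ℝ b x) (hq : DifferentiableAt ℝ q x)
    (hdivw : vdiv w x = 0) (hdivv : vdiv v x = 0) :
    vdiv (relativeEnergyFlux w B v b q) x
      = dot (adv v v x) (w x) + dot (v x) (adv v w x)
        - (dot (v x) (adv w v x) + dot (b x) (adv w b x)) - dot (v x) (grad q x)
        + (dot (b x) (vcurl (fun y => cross (v y) (B y)) x)
          - dot (cross (v x) (B x)) (vcurl b x)) := by
  unfold relativeEnergyFlux
  simp (disch := fun_prop) only [vdiv_add, vdiv_sub, vdiv_smul, vdiv_cross]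
  rw [dot_grad_dot hv hw, dot_grad_energyDensity hv hb, hdivw, hdivv]
  ring

theorem dot_vcurl_cross (hw : DifferentiableAt ℝ w x) (hb : DifferentiableAt ℝ b x)
    (hdivw : vdiv w x = 0) (hdivb : vdiv b x = 0) :
    dot (b x) (vcurl (fun y => cross (w y) (b y)) x)
      = dot (b x) (adv b w x) - dot (b x) (adv w b x) := by
  rw [vcurl_cross hw hb, hdivw, hdivb]
  simp [dot]
  ring

theorem dot_vcurl_cross_sub {u B w H : V3 → V3} (hu : DifferentiableAt ℝ u x)
    (hB : DifferentiableAt ℝ B x) (hw : DifferentiableAt ℝ w x) (hH : DifferentiableAt ℝ H x)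
    (hdivw : vdiv w x = 0) (hdivb : vdiv (fun y => B y - H y) x = 0) :
    dot (B x - H x) (vcurl (fun y => cross (u y) (B y)) x - vcurl (fun y => cross (w y) (H y)) x)
      = dot (B x - H x) (vcurl (fun y => cross (u y - w y) (B y)) x)
        + (dot (B x - H x) (adv (fun y => B y - H y) w x)
          - dot (B x - H x) (adv w (fun y => B y - H y) x)) := by
  have hsplit : (fun y => cross (u y) (B y) - cross (w y) (H y))
      = fun y => cross (u y - w y) (B y) + cross (w y) (B y - H y) := by
    ext y i
    fin_cases i <;> simp [cross] <;> ring
  have hcurl : vcurl (fun y => cross (u y) (B y)) x - vcurl (fun y => cross (w y) (H y)) x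
      = vcurl (fun y => cross (u y - w y) (B y)) x
        + vcurl (fun y => cross (w y) (B y - H y)) x := by
    rw [← vcurl_sub (by fun_prop) (by fun_prop), hsplit, vcurl_add (by fun_prop) (by fun_prop)]
  rw [hcurl, ← dot_vcurl_cross hw (by fun_prop) hdivw hdivb]
  simp only [dot, Pi.add_apply]
  ring

theorem dot_mhdAcceleration_sub {u B w H : V3 → V3} {P Q : V3 → ℝ} (hu : DifferentiableAt ℝ u x)
    (hB : DifferentiableAt ℝ B x) (hP : DifferentiableAt ℝ P x) (hw : DifferentiableAt ℝ w x)
    (hH : DifferentiableAt ℝ H x) (hQ : DifferentiableAt ℝ Q x) :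
    dot (u x - w x) (mhdAcceleration u B P x - mhdAcceleration w H Q x)
      = -dot (u x - w x) (cross (vcurl (fun y => u y - w y) x) (w x))
        - dot (u x - w x) (grad (fun y => P y - Q y) x)
        - dot (cross (u x - w x) (B x)) (vcurl (fun y => B y - H y) x)
        + dot (u x - w x) (cross (vcurl H x) (B x - H x)) := by
  have hgrad : grad (fun y => P y - Q y) x = grad P x - grad Q x := funext fun _ => pd_sub hP hQ
  rw [vcurl_sub hu hw, vcurl_sub hB hH, hgrad]
  simp only [mhdAcceleration, dot, cross, Pi.sub_apply, Pi.add_apply, Pi.neg_apply,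
    Matrix.cons_val]
  ring

theorem relativeEnergy_production {u B w H : V3 → V3} {P Q : V3 → ℝ}
    (hu : DifferentiableAt ℝ u x) (hB : DifferentiableAt ℝ B x) (hP : DifferentiableAt ℝ P x)
    (hw : DifferentiableAt ℝ w x) (hH : DifferentiableAt ℝ H x) (hQ : DifferentiableAt ℝ Q x)
    (hdivu : vdiv u x = 0) (hdivw : vdiv w x = 0) (hdivBH : vdiv B x = vdiv H x) :
    dot (u x - w x) (mhdAcceleration u B P x - mhdAcceleration w H Q x)
        + dot (B x - H x)
          (vcurl (fun y => cross (u y) (B y)) x - vcurl (fun y => cross (w y) (H y)) x)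
      = vdiv (relativeEnergyFlux w B (fun y => u y - w y) (fun y => B y - H y)
          fun y => P y - Q y) x
        + relativeEnergySource w H (fun y => u y - w y) (fun y => B y - H y) x := by
  have hdivv : vdiv (fun y => u y - w y) x = 0 := by rw [vdiv_sub hu hw, hdivu, hdivw, sub_zero]
  have hdivb : vdiv (fun y => B y - H y) x = 0 := by rw [vdiv_sub hB hH, hdivBH, sub_self]
  rw [dot_mhdAcceleration_sub hu hB hP hw hH hQ, dot_vcurl_cross_sub hu hB hw hH hdivw hdivb,
    vdiv_relativeEnergyFlux hw hB (by fun_prop) (by fun_prop) (by fun_prop) hdivw hdivv]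
  have hLambv := dot_cross_vcurl (fun y => u y - w y) w (fun y => u y - w y) x
  have hLambH := dot_cross_vcurl H (fun y => B y - H y) (fun y => u y - w y) x
  dsimp only [relativeEnergySource] at hLambv hLambH ⊢
  rw [hLambv, hLambH]
  simp only [dot]
  ring

theorem abs_relativeEnergySource_le {M : ℝ} (hw : DifferentiableAt ℝ w x)
    (hH : DifferentiableAt ℝ H x) (hwM : ‖fderiv ℝ w x‖ ≤ M) (hHM : ‖fderiv ℝ H x‖ ≤ M) :
    |relativeEnergySource w H v b x| ≤ 12 * M * energyDensity (v x) (b x) := by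
  have hbb := abs_le.1 (abs_dot_adv_le (b := b) (c := b) hw hwM)
  have hvv := abs_le.1 (abs_dot_adv_le (b := v) (c := v) hw hwM)
  have hvb := abs_le.1 (abs_dot_adv_le (b := v) (c := b) hH hHM)
  have hbv := abs_le.1 (abs_dot_adv_le (b := b) (c := v) hH hHM)
  unfold relativeEnergySource energyDensity
  rw [abs_le]
  constructor <;> linarith

theorem contDiff_relativeEnergyFlux {n : WithTop ℕ∞} (hw : ContDiff ℝ n w) (hB : ContDiff ℝ n B)
    (hv : ContDiff ℝ n v) (hb : ContDiff ℝ n b) (hq : ContDiff ℝ n q) :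
    ContDiff ℝ n (relativeEnergyFlux w B v b q) := by
  unfold relativeEnergyFlux
  fun_prop

theorem hperV_relativeEnergyFlux (hw : hperV w) (hB : hperV B) (hv : hperV v) (hb : hperV b)
    (hq : hperS q) : hperV (relativeEnergyFlux w B v b q) := by
  constructor <;> intro x <;>
    simp only [relativeEnergyFlux, hw.1 x, hB.1 x, hv.1 x, hb.1 x, hq.1 x, hw.2 x, hB.2 x, hv.2 x,
      hb.2 x, hq.2 x]

theorem relativeEnergyFlux_normal_eq_zero (hw : w x 2 = 0) (hv : v x 2 = 0) (hb0 : b x 0 = 0)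
    (hb1 : b x 1 = 0) : relativeEnergyFlux w B v b q x 2 = 0 := by
  simp [relativeEnergyFlux, cross, hw, hv, hb0, hb1]

end RelativeEnergy

section Slab

/-- The closure `{0 ≤ x₃ ≤ 1}` of the fluid domain `Ω`. -/
def slab : Set V3 := {x | x 2 ∈ Set.Icc 0 1}

theorem Q3_subset_slab : Q3 ⊆ slab := fun _ hx => ⟨hx.1 2, hx.2 2⟩

theorem isCompact_Q3 : IsCompact Q3 := isCompact_Icc

theorem Q3_subset_closure_interior : Q3 ⊆ closure (interior Q3) := by
  have hpi : Q3 = Set.univ.pi fun _ => Set.Icc (0 : ℝ) 1 := (Set.pi_univ_Icc 0 1).symm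
  rw [hpi, interior_pi_set Set.finite_univ, closure_pi_set]
  simp only [interior_Icc, closure_Ioo zero_ne_one, subset_rfl]

theorem hperV.eqOn_slab {u w : V3 → V3} (hu : hperV u) (hw : hperV w) (h : Set.EqOn u w Q3) :
    Set.EqOn u w slab := by
  have hu₀ : Function.Periodic u (Pi.single 0 1) := hu.1
  have hu₁ : Function.Periodic u (Pi.single 1 1) := hu.2
  have hw₀ : Function.Periodic w (Pi.single 0 1) := hw.1
  have hw₁ : Function.Periodic w (Pi.single 1 1) := hw.2
  intro x hx
  rw [← hu₀.sub_zsmul_eq ⌊x 0⌋, ← hu₁.sub_zsmul_eq ⌊x 1⌋, ← hw₀.sub_zsmul_eq ⌊x 0⌋,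
    ← hw₁.sub_zsmul_eq ⌊x 1⌋]
  apply h
  constructor <;> intro i <;> fin_cases i <;>
    simp [hx.1, hx.2, (Int.fract_lt_one _).le]

theorem hperV.sub {u w : V3 → V3} (hu : hperV u) (hw : hperV w) : hperV fun x => u x - w x := by
  constructor <;> intro x <;> simp only [hu.1 x, hw.1 x, hu.2 x, hw.2 x]

theorem hperS.sub {p q : V3 → ℝ} (hp : hperS p) (hq : hperS q) : hperS fun x => p x - q x := by
  constructor <;> intro x <;> simp only [hp.1 x, hq.1 x, hp.2 x, hq.2 x]

theorem integral_vdiv_Q3_eq_zero {F : V3 → V3} (hF : ContDiff ℝ 1 F) (hper : hperV F)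
    (hbc : ∀ x, onBdry x → F x 2 = 0) : ∫ x in Q3, vdiv F x = 0 := by
  have hshift (i : Fin 3) (y : Fin 2 → ℝ) :
      (Fin.insertNth i 1 y : V3) = (Fin.insertNth i 0 y : V3) + Pi.single i 1 := by
    simpa using Fin.insertNth_add (α := fun _ => ℝ) i 0 1 y 0
  simp_rw [fun x => vdiv_eq_sum_fderiv (hF.differentiable one_ne_zero x)]
  refine integral_divergence_eq_zero_of_faces hF zero_le_one fun i y => ?_
  match i with
  | 0 => exact congrFun (hshift 0 y ▸ hper.1 _) 0
  | 1 => exact congrFun (hshift 1 y ▸ hper.2 _) 1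
  | 2 =>
    have htop : onBdry (Fin.insertNth 2 1 y) := .inr (Fin.insertNth_apply_same (α := fun _ => ℝ) ..)
    have hbot : onBdry (Fin.insertNth 2 0 y) := .inl (Fin.insertNth_apply_same (α := fun _ => ℝ) ..)
    exact (hbc _ htop).trans (hbc _ hbot).symm

theorem continuous_vdiv {F : V3 → V3} (hF : ContDiff ℝ 1 F) : Continuous (vdiv F) := by
  have hF' : Continuous (fderiv ℝ F) := hF.continuous_fderiv one_ne_zero
  simp_rw [funext fun x => vdiv_eq_sum_fderiv (hF.differentiable one_ne_zero x)]
  exact continuous_finsetSum _ fun i _ =>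
    (continuous_apply i).comp (hF'.clm_apply continuous_const)

theorem abs_integral_Q3_le_of_abs_sub_vdiv_le {F : V3 → V3} (hF : ContDiff ℝ 1 F)
    (hper : hperV F) (hbc : ∀ x, onBdry x → F x 2 = 0) {f g : V3 → ℝ} (hf : Continuous f)
    (hg : Continuous g) (h : ∀ x ∈ Q3, |f x - vdiv F x| ≤ g x) :
    |∫ x in Q3, f x| ≤ ∫ x in Q3, g x := by
  have hint {φ : V3 → ℝ} (hφ : Continuous φ) : IntegrableOn φ Q3 :=
    hφ.continuousOn.integrableOn_compact isCompact_Q3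
  have hsub : ∫ x in Q3, f x = ∫ x in Q3, (f x - vdiv F x) := by
    rw [integral_sub (hint hf) (hint (continuous_vdiv hF)), integral_vdiv_Q3_eq_zero hF hper hbc,
      sub_zero]
  have hae : ∀ᵐ x ∂volume.restrict Q3, ‖f x - vdiv F x‖ ≤ g x :=
    (ae_restrict_iff' isCompact_Q3.measurableSet).2 (.of_forall h)
  rw [hsub]
  exact norm_integral_le_of_norm_le (hint hg) hae

end Slab

/-- A horizontally periodic classical (`C¹`) solution of the ideal incompressible MHD system on
`[0, T]` in the slab, with impermeable walls. The magnetic boundary condition is left out, since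
uniqueness only needs the tangential traces of two solutions to agree. The fields live on all of
`ℝ × ℝ³`, so that derivatives at `t = 0`, `t = T` and on `∂Ω` are two-sided; the equations are
imposed on the slab only. -/
structure IsIdealMHDSolution (T : ℝ) (u B : ℝ → V3 → V3) (P : ℝ → V3 → ℝ) : Prop where
  contDiff_velocity : ContDiff ℝ 1 (Function.uncurry u)
  contDiff_magnetic : ContDiff ℝ 1 (Function.uncurry B)
  contDiff_pressure : ∀ t ∈ Set.Icc 0 T, ContDiff ℝ 1 (P t)
  periodic_velocity : ∀ t ∈ Set.Icc 0 T, hperV (u t)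
  periodic_magnetic : ∀ t ∈ Set.Icc 0 T, hperV (B t)
  periodic_pressure : ∀ t ∈ Set.Icc 0 T, hperS (P t)
  momentum : ∀ t ∈ Set.Icc 0 T, ∀ x ∈ slab, ∀ i,
    deriv (fun s => u s x i) t + cross (vcurl (u t) x) (u t x) i
      + cross (B t x) (vcurl (B t) x) i + grad (P t) x i = 0
  vdiv_velocity : ∀ t ∈ Set.Icc 0 T, ∀ x ∈ slab, vdiv (u t) x = 0
  faraday : ∀ t ∈ Set.Icc 0 T, ∀ x ∈ slab, ∀ i,
    deriv (fun s => B s x i) t = vcurl (fun y => cross (u t y) (B t y)) x i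
  vdiv_magnetic : ∀ t ∈ Set.Icc 0 T, ∀ x ∈ slab, vdiv (B t) x = 0
  impermeable : ∀ t ∈ Set.Icc 0 T, ∀ x, onBdry x → u t x 2 = 0

namespace IsIdealMHDSolution

variable {T : ℝ} {u B u0 B0 : ℝ → V3 → V3} {P P0 : ℝ → V3 → ℝ} {t : ℝ} {x : V3}

theorem contDiff_velocity_slice (h : IsIdealMHDSolution T u B P) (t : ℝ) : ContDiff ℝ 1 (u t) :=
  h.contDiff_velocity.comp (contDiff_prodMk_right t)

theorem contDiff_magnetic_slice (h : IsIdealMHDSolution T u B P) (t : ℝ) : ContDiff ℝ 1 (B t) :=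
  h.contDiff_magnetic.comp (contDiff_prodMk_right t)

theorem hasDerivAt_velocity (h : IsIdealMHDSolution T u B P) (ht : t ∈ Set.Icc 0 T)
    (hx : x ∈ slab) : HasDerivAt (fun s => u s x) (mhdAcceleration (u t) (B t) (P t) x) t := by
  have hu : ContDiff ℝ 1 fun s => u s x := h.contDiff_velocity.comp (contDiff_prodMk_left x)
  refine hasDerivAt_pi.2 fun i => ?_
  have hui : DifferentiableAt ℝ (fun s => u s x i) t :=
    differentiableAt_pi.1 (hu.differentiable one_ne_zero t) i
  refine hui.hasDerivAt.congr_deriv ?_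
  simp only [mhdAcceleration, Pi.neg_apply, Pi.add_apply]
  linear_combination h.momentum t ht x hx i

theorem hasDerivAt_magnetic (h : IsIdealMHDSolution T u B P) (ht : t ∈ Set.Icc 0 T)
    (hx : x ∈ slab) :
    HasDerivAt (fun s => B s x) (vcurl (fun y => cross (u t y) (B t y)) x) t := by
  have hB : ContDiff ℝ 1 fun s => B s x := h.contDiff_magnetic.comp (contDiff_prodMk_left x)
  refine hasDerivAt_pi.2 fun i => ?_
  have hBi : DifferentiableAt ℝ (fun s => B s x i) t :=
    differentiableAt_pi.1 (hB.differentiable one_ne_zero t) i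
  exact hBi.hasDerivAt.congr_deriv (h.faraday t ht x hx i)

theorem deriv_energyDensity_sub (h : IsIdealMHDSolution T u B P)
    (h0 : IsIdealMHDSolution T u0 B0 P0) (ht : t ∈ Set.Icc 0 T) (hx : x ∈ slab) :
    deriv (fun s => energyDensity (u s x - u0 s x) (B s x - B0 s x)) t
      = vdiv (relativeEnergyFlux (u0 t) (B t) (fun y => u t y - u0 t y) (fun y => B t y - B0 t y)
          fun y => P t y - P0 t y) x
        + relativeEnergySource (u0 t) (B0 t) (fun y => u t y - u0 t y)
          (fun y => B t y - B0 t y) x := by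
  rw [(hasDerivAt_energyDensity
    ((h.hasDerivAt_velocity ht hx).fun_sub (h0.hasDerivAt_velocity ht hx))
    ((h.hasDerivAt_magnetic ht hx).fun_sub (h0.hasDerivAt_magnetic ht hx))).deriv]
  exact relativeEnergy_production ((h.contDiff_velocity_slice t).differentiable one_ne_zero x)
    ((h.contDiff_magnetic_slice t).differentiable one_ne_zero x)
    ((h.contDiff_pressure t ht).differentiable one_ne_zero x)
    ((h0.contDiff_velocity_slice t).differentiable one_ne_zero x)
    ((h0.contDiff_magnetic_slice t).differentiable one_ne_zero x)
    ((h0.contDiff_pressure t ht).differentiable one_ne_zero x)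
    (h.vdiv_velocity t ht x hx) (h0.vdiv_velocity t ht x hx)
    ((h.vdiv_magnetic t ht x hx).trans (h0.vdiv_magnetic t ht x hx).symm)

theorem contDiff_energyDensity_sub (h : IsIdealMHDSolution T u B P)
    (h0 : IsIdealMHDSolution T u0 B0 P0) :
    ContDiff ℝ 1 (Function.uncurry fun s x => energyDensity (u s x - u0 s x) (B s x - B0 s x)) :=
  contDiff_energyDensity (h.contDiff_velocity.sub h0.contDiff_velocity)
    (h.contDiff_magnetic.sub h0.contDiff_magnetic)

theorem abs_integral_deriv_energyDensity_sub_le (h : IsIdealMHDSolution T u B P)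
    (h0 : IsIdealMHDSolution T u0 B0 P0) (ht : t ∈ Set.Icc 0 T)
    (hbc : ∀ x, onBdry x → B t x 0 = B0 t x 0 ∧ B t x 1 = B0 t x 1) {M : ℝ}
    (hu0 : ∀ x ∈ Q3, ‖fderiv ℝ (u0 t) x‖ ≤ M) (hB0 : ∀ x ∈ Q3, ‖fderiv ℝ (B0 t) x‖ ≤ M) :
    |∫ x in Q3, deriv (fun s => energyDensity (u s x - u0 s x) (B s x - B0 s x)) t|
      ≤ 12 * M * ∫ x in Q3, energyDensity (u t x - u0 t x) (B t x - B0 t x) := by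
  have hu := h.contDiff_velocity_slice t
  have hw := h0.contDiff_velocity_slice t
  have hB := h.contDiff_magnetic_slice t
  have hH := h0.contDiff_magnetic_slice t
  have hflux := contDiff_relativeEnergyFlux hw hB (hu.sub hw) (hB.sub hH)
    ((h.contDiff_pressure t ht).sub (h0.contDiff_pressure t ht))
  have hper := hperV_relativeEnergyFlux (h0.periodic_velocity t ht) (h.periodic_magnetic t ht)
    ((h.periodic_velocity t ht).sub (h0.periodic_velocity t ht))
    ((h.periodic_magnetic t ht).sub (h0.periodic_magnetic t ht))
    ((h.periodic_pressure t ht).sub (h0.periodic_pressure t ht))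
  rw [← integral_const_mul]
  refine abs_integral_Q3_le_of_abs_sub_vdiv_le hflux hper (fun x hx => ?_)
    ((continuous_deriv_of_contDiff (h.contDiff_energyDensity_sub h0)).comp
      (Continuous.prodMk_right t))
    (continuous_const.mul (contDiff_energyDensity (hu.sub hw) (hB.sub hH)).continuous)
    fun x hx => ?_
  · have hux := h.impermeable t ht x hx
    have hwx := h0.impermeable t ht x hx
    exact relativeEnergyFlux_normal_eq_zero hwx (sub_eq_zero.2 (hux.trans hwx.symm))
      (sub_eq_zero.2 (hbc x hx).1) (sub_eq_zero.2 (hbc x hx).2)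
  · rw [h.deriv_energyDensity_sub h0 ht (Q3_subset_slab hx), add_sub_cancel_left]
    exact abs_relativeEnergySource_le (hw.differentiable one_ne_zero x)
      (hH.differentiable one_ne_zero x) (hu0 x hx) (hB0 x hx)

theorem exists_abs_integral_deriv_energyDensity_sub_le (h : IsIdealMHDSolution T u B P)
    (h0 : IsIdealMHDSolution T u0 B0 P0)
    (hbc : ∀ t ∈ Set.Icc 0 T, ∀ x, onBdry x → B t x 0 = B0 t x 0 ∧ B t x 1 = B0 t x 1) :
    ∃ C, ∀ t ∈ Set.Icc 0 T,
      |∫ x in Q3, deriv (fun s => energyDensity (u s x - u0 s x) (B s x - B0 s x)) t|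
        ≤ C * ∫ x in Q3, energyDensity (u t x - u0 t x) (B t x - B0 t x) := by
  obtain ⟨Mu, hMu⟩ := exists_norm_fderiv_le_of_isCompact h0.contDiff_velocity
    (isCompact_Icc (a := 0) (b := T)) isCompact_Q3
  obtain ⟨MB, hMB⟩ := exists_norm_fderiv_le_of_isCompact h0.contDiff_magnetic
    (isCompact_Icc (a := 0) (b := T)) isCompact_Q3
  exact ⟨12 * max Mu MB, fun t ht => h.abs_integral_deriv_energyDensity_sub_le h0 ht (hbc t ht)
    (fun x hx => (hMu t ht x hx).trans (le_max_left _ _))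
    (fun x hx => (hMB t ht x hx).trans (le_max_right _ _))⟩

end IsIdealMHDSolution

theorem stmt_17_general {T : ℝ} {u B u0 B0 : ℝ → V3 → V3} {P P0 : ℝ → V3 → ℝ}
    (h : IsIdealMHDSolution T u B P) (h0 : IsIdealMHDSolution T u0 B0 P0)
    (hbc : ∀ t ∈ Set.Icc 0 T, ∀ x, onBdry x → B t x 0 = B0 t x 0 ∧ B t x 1 = B0 t x 1)
    (hinit : ∀ x ∈ slab, u 0 x = u0 0 x ∧ B 0 x = B0 0 x) :
    ∀ t ∈ Set.Icc 0 T, ∀ x ∈ slab, u t x = u0 t x ∧ B t x = B0 t x := by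
  have hiff (t : ℝ) (x : V3) : energyDensity (u t x - u0 t x) (B t x - B0 t x) = 0
      ↔ u t x = u0 t x ∧ B t x = B0 t x := by
    rw [energyDensity_eq_zero, sub_eq_zero, sub_eq_zero]
  obtain ⟨C, hC⟩ := h.exists_abs_integral_deriv_energyDensity_sub_le h0 hbc
  have hzero := eqOn_zero_of_abs_setIntegral_deriv_le isCompact_Q3 Q3_subset_closure_interior
    (h.contDiff_energyDensity_sub h0) (fun t x _ => energyDensity_nonneg _ _)
    (fun x hx => (hiff 0 x).2 (hinit x (Q3_subset_slab hx))) hC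
  intro t ht x hx
  have hQ (y : V3) (hy : y ∈ Q3) : u t y = u0 t y ∧ B t y = B0 t y := (hiff t y).1 (hzero t ht hy)
  exact ⟨(h.periodic_velocity t ht).eqOn_slab (h0.periodic_velocity t ht)
      (fun y hy => (hQ y hy).1) hx,
    (h.periodic_magnetic t ht).eqOn_slab (h0.periodic_magnetic t ht) (fun y hy => (hQ y hy).2) hx⟩

/-- Uniqueness for the ideal MHD system: two smooth horizontally periodic solutions on
`[0,T]` with `u·n = 0` and `B × n = 0` on `∂Ω` which agree at `t = 0` on the slab
`{0 ≤ x₃ ≤ 1}` agree on `[0,T] × {0 ≤ x₃ ≤ 1}`. -/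
theorem stmt_17 (T : ℝ) (hT : 0 < T)
    (u B u0 B0 : ℝ → V3 → V3) (P P0 : ℝ → V3 → ℝ)
    (hu : ContDiff ℝ (⊤ : ℕ∞) (Function.uncurry u))
    (hB : ContDiff ℝ (⊤ : ℕ∞) (Function.uncurry B))
    (hP : ContDiff ℝ (⊤ : ℕ∞) (Function.uncurry P))
    (hu0 : ContDiff ℝ (⊤ : ℕ∞) (Function.uncurry u0))
    (hB0 : ContDiff ℝ (⊤ : ℕ∞) (Function.uncurry B0))
    (hP0 : ContDiff ℝ (⊤ : ℕ∞) (Function.uncurry P0))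
    (huper : ∀ t, hperV (u t)) (hBper : ∀ t, hperV (B t)) (hPper : ∀ t, hperS (P t))
    (hu0per : ∀ t, hperV (u0 t)) (hB0per : ∀ t, hperV (B0 t)) (hP0per : ∀ t, hperS (P0 t))
    (hmom : ∀ t ∈ Set.Icc (0:ℝ) T, ∀ x, ∀ i : Fin 3,
      deriv (fun s => u s x i) t + cross (vcurl (u t) x) (u t x) i
        + cross (B t x) (vcurl (B t) x) i + grad (P t) x i = 0)
    (hdivu : ∀ t ∈ Set.Icc (0:ℝ) T, ∀ x, vdiv (u t) x = 0)
    (hind : ∀ t ∈ Set.Icc (0:ℝ) T, ∀ x, ∀ i : Fin 3,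
      deriv (fun s => B s x i) t = vcurl (fun y => cross (u t y) (B t y)) x i)
    (hdivB : ∀ t ∈ Set.Icc (0:ℝ) T, ∀ x, vdiv (B t) x = 0)
    (hmom0 : ∀ t ∈ Set.Icc (0:ℝ) T, ∀ x, ∀ i : Fin 3,
      deriv (fun s => u0 s x i) t + cross (vcurl (u0 t) x) (u0 t x) i
        + cross (B0 t x) (vcurl (B0 t) x) i + grad (P0 t) x i = 0)
    (hdivu0 : ∀ t ∈ Set.Icc (0:ℝ) T, ∀ x, vdiv (u0 t) x = 0)
    (hind0 : ∀ t ∈ Set.Icc (0:ℝ) T, ∀ x, ∀ i : Fin 3,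
      deriv (fun s => B0 s x i) t = vcurl (fun y => cross (u0 t y) (B0 t y)) x i)
    (hdivB0 : ∀ t ∈ Set.Icc (0:ℝ) T, ∀ x, vdiv (B0 t) x = 0)
    (hubc : ∀ t ∈ Set.Icc (0:ℝ) T, ∀ x, onBdry x → u t x 2 = 0)
    (hu0bc : ∀ t ∈ Set.Icc (0:ℝ) T, ∀ x, onBdry x → u0 t x 2 = 0)
    (hBbc : ∀ t ∈ Set.Icc (0:ℝ) T, ∀ x, onBdry x → B t x 0 = 0 ∧ B t x 1 = 0)
    (hB0bc : ∀ t ∈ Set.Icc (0:ℝ) T, ∀ x, onBdry x → B0 t x 0 = 0 ∧ B0 t x 1 = 0)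
    (hinit : ∀ x : V3, 0 ≤ x 2 → x 2 ≤ 1 → u 0 x = u0 0 x ∧ B 0 x = B0 0 x) :
    ∀ t ∈ Set.Icc (0:ℝ) T, ∀ x : V3, 0 ≤ x 2 → x 2 ≤ 1 →
      u t x = u0 t x ∧ B t x = B0 t x := by
  have hone : (1 : WithTop ℕ∞) ≤ (⊤ : ℕ∞) := by simp
  have hsol : IsIdealMHDSolution T u B P :=
    ⟨hu.of_le hone, hB.of_le hone, fun t _ => (hP.comp (contDiff_prodMk_right t)).of_le hone,
      fun t _ => huper t, fun t _ => hBper t, fun t _ => hPper t, fun t ht x _ => hmom t ht x,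
      fun t ht x _ => hdivu t ht x, fun t ht x _ => hind t ht x, fun t ht x _ => hdivB t ht x, hubc⟩
  have hsol0 : IsIdealMHDSolution T u0 B0 P0 :=
    ⟨hu0.of_le hone, hB0.of_le hone, fun t _ => (hP0.comp (contDiff_prodMk_right t)).of_le hone,
      fun t _ => hu0per t, fun t _ => hB0per t, fun t _ => hP0per t, fun t ht x _ => hmom0 t ht x,
      fun t ht x _ => hdivu0 t ht x, fun t ht x _ => hind0 t ht x, fun t ht x _ => hdivB0 t ht x,
      hu0bc⟩
  have hbc (t : ℝ) (ht : t ∈ Set.Icc 0 T) (x : V3) (hx : onBdry x) :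
      B t x 0 = B0 t x 0 ∧ B t x 1 = B0 t x 1 := by
    simp only [hBbc t ht x hx, hB0bc t ht x hx, and_self]
  exact fun t ht x hx₀ hx₁ =>
    stmt_17_general hsol hsol0 hbc (fun y hy => hinit y hy.1 hy.2) t ht x ⟨hx₀, hx₁⟩
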